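/- (Fractional Poincaré inequality.) Let d ≥ 1, s ∈ (0,1), and let Ω ⊂ ℝ^d be open and bounded. Then there exists a constant C > 0, depending only on d, s and Ω, such that for every u ∈ C_c^∞(Ω): ‖u‖_{L²(Ω)} ≤ C ‖∇^s u‖_{L²(ℝ^d; ℝ^d)}. -/

import Mathlib

open MeasureTheory Filter Topology

noncomputable section

/-- The normalising constant `μ_s` of the Riesz fractional operators. -/
def muS (d : ℕ) (s : ℝ) : ℝ :=
  2 ^ s * Real.pi ^ (-(d : ℝ) / 2) * Real.Gamma (((d : ℝ) + s + 1) / 2) /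
    Real.Gamma ((1 - s) / 2)

/-- The Riesz fractional gradient `∇^s u (x)`. -/
def fracGrad (d : ℕ) (s : ℝ) (u : EuclideanSpace ℝ (Fin d) → ℝ)
    (x : EuclideanSpace ℝ (Fin d)) : EuclideanSpace ℝ (Fin d) :=
  muS d s • ∫ y, (‖x - y‖ ^ ((d : ℝ) + s + 1))⁻¹ • ((u x - u y) • (x - y))

/-!
On the Fourier side `∇^s` is multiplication by a vector-valued symbol `σ(ξ)`. The imaginary part of
`ξ · σ(ξ)` is a multiple of `ξ · ∇P(ξ)` for the radial, `(1 + s)`-homogeneous function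
`P(ξ) = ∫ (1 - cos (2π⟪z, ξ⟫)) |z|^{-(d+s+1)} dz`, so by Euler's identity it is a multiple of
`|ξ|^{1+s}`, and hence `|σ(ξ)|² ≥ c |ξ|^{2s}`.

If `u` is supported in a set `Ω` of finite measure, then `|û|² ≤ |Ω| ‖u‖²` pointwise, so a ball
around the origin with volume at most `1 / (2|Ω|)` carries at most half of `‖û‖² = ‖u‖²`. Outside
of this ball the symbol is bounded below, so the other half is controlled by `‖∇^s u‖²`.
-/

section RieszGradient

open scoped FourierTransform RealInnerProductSpace NNReal ENNReal

section Measure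

variable {α F : Type*} [MeasurableSpace α] [NormedAddCommGroup F] {μ : Measure α}

theorem norm_sq_toLp {f : α → F} (hf : MemLp f 2 μ) : ‖hf.toLp f‖ ^ 2 = ∫ x, ‖f x‖ ^ 2 ∂μ := by
  have integral_nonneg_sq : 0 ≤ ∫ x, ‖f x‖ ^ 2 ∂μ := integral_nonneg fun x => by positivity
  rw [Lp.norm_toLp, hf.eLpNorm_eq_integral_rpow_norm two_ne_zero ENNReal.ofNat_ne_top,
    ENNReal.toReal_ofReal (by positivity)]
  simp only [ENNReal.toReal_ofNat, Real.rpow_two]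
  rw [← Real.rpow_natCast, ← Real.rpow_mul integral_nonneg_sq]
  norm_num

theorem sq_integral_norm_le {f : α → F} {S : Set α} (hS : μ S ≠ ∞) (hf : MemLp f 2 μ)
    (hfS : Function.support f ⊆ S) :
    (∫ x, ‖f x‖ ∂μ) ^ 2 ≤ μ.real S * ∫ x, ‖f x‖ ^ 2 ∂μ := by
  have vanish {x : α} (hx : x ∉ S) : ‖f x‖ = 0 := by
    rw [norm_eq_zero, ← Function.notMem_support]
    exact fun h => hx (hfS h)
  have : IsFiniteMeasure (μ.restrict S) := ⟨by simpa using hS.lt_top⟩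
  have memLp_one : MemLp (fun _ : α => (1 : ℝ)) (ENNReal.ofReal 2) (μ.restrict S) := memLp_const 1
  have memLp_norm : MemLp (fun x => ‖f x‖) (ENNReal.ofReal 2) (μ.restrict S) := by
    simpa using (hf.restrict S).norm
  have hölder := integral_mul_norm_le_Lp_mul_Lq Real.HolderConjugate.two_two memLp_one memLp_norm
  have norm_le : ∫ x in S, ‖f x‖ ∂μ ≤ √(μ.real S) * √(∫ x in S, ‖f x‖ ^ 2 ∂μ) := by
    simpa [Real.sqrt_eq_rpow] using hölder
  have restrict_norm : ∫ x in S, ‖f x‖ ∂μ = ∫ x, ‖f x‖ ∂μ :=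
    setIntegral_eq_integral_of_forall_compl_eq_zero fun x hx => vanish hx
  have restrict_sq : ∫ x in S, ‖f x‖ ^ 2 ∂μ = ∫ x, ‖f x‖ ^ 2 ∂μ :=
    setIntegral_eq_integral_of_forall_compl_eq_zero fun x hx => by rw [vanish hx, sq, zero_mul]
  rw [restrict_norm, restrict_sq] at norm_le
  calc (∫ x, ‖f x‖ ∂μ) ^ 2 ≤ (√(μ.real S) * √(∫ x, ‖f x‖ ^ 2 ∂μ)) ^ 2 :=
        pow_le_pow_left₀ (integral_nonneg fun x => norm_nonneg _) norm_le 2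
    _ = μ.real S * ∫ x, ‖f x‖ ^ 2 ∂μ := by
      rw [mul_pow, Real.sq_sqrt measureReal_nonneg,
        Real.sq_sqrt (integral_nonneg fun x => by positivity)]

theorem integrable_of_memLp_two_of_support_subset {f : α → F} (hf : MemLp f 2 μ) {S : Set α}
    (hS : μ S ≠ ∞) (hfS : Function.support f ⊆ S) : Integrable f μ :=
  memLp_one_iff_integrable.1 <| hf.mono_exponent_of_measure_support_ne_top
    (fun _ hx => Function.notMem_support.1 fun h => hx (hfS h)) hS one_le_two

theorem memLp_two_of_norm_le {f : α → F} (hf : Integrable f μ) {M : ℝ} (hM : ∀ x, ‖f x‖ ≤ M) :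
    MemLp f 2 μ := by
  refine (memLp_two_iff_integrable_sq_norm hf.aestronglyMeasurable).2 <|
    (hf.norm.const_mul M).mono' (hf.aestronglyMeasurable.norm.pow 2) (ae_of_all _ fun x => ?_)
  rw [norm_pow, norm_norm, sq]
  exact mul_le_mul_of_nonneg_right (hM x) (norm_nonneg _)

theorem memLp_of_norm_le_of_support_subset {f : α → F} (hf : AEStronglyMeasurable f μ) {M : ℝ}
    (hM : ∀ x, ‖f x‖ ≤ M) {S : Set α} (hS : μ S ≠ ∞) (hfS : Function.support f ⊆ S) (p : ℝ≥0∞) :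
    MemLp f p μ :=
  (memLp_top_of_bound hf M (ae_of_all _ hM)).mono_exponent_of_measure_support_ne_top
    (fun _ hx => Function.notMem_support.1 fun h => hx (hfS h)) hS le_top

theorem exists_measure_ball_lt {X : Type*} [PseudoMetricSpace X] [MeasurableSpace X]
    (μ : Measure X) [μ.OuterRegular] [NullSingletonClass μ] (x : X) {r : ℝ≥0∞} (hr : r ≠ 0) :
    ∃ ε > 0, μ (Metric.ball x ε) < r := by
  obtain ⟨U, hxU, hU, hUr⟩ := Set.exists_isOpen_lt_of_lt ({x} : Set X) r
    ((measure_singleton (μ := μ) x).trans_lt (pos_iff_ne_zero.2 hr))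
  obtain ⟨ε, hε, hball⟩ := Metric.isOpen_iff.1 hU x (hxU rfl)
  exact ⟨ε, hε, (measure_mono hball).trans_lt hUr⟩

theorem exists_measureReal_ball_mul_le {X : Type*} [PseudoMetricSpace X] [MeasurableSpace X]
    (μ : Measure X) [μ.OuterRegular] [NullSingletonClass μ] (x : X) {W δ : ℝ} (hW : 0 ≤ W)
    (hδ : 0 < δ) : ∃ ε > 0, μ (Metric.ball x ε) ≠ ∞ ∧ μ.real (Metric.ball x ε) * W ≤ δ := by
  have ratio_pos : 0 < δ / (W + 1) := by positivity
  obtain ⟨ε, hε, hball⟩ := exists_measure_ball_lt μ x (ENNReal.ofReal_pos.2 ratio_pos).ne'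
  refine ⟨ε, hε, hball.ne_top, ?_⟩
  calc μ.real (Metric.ball x ε) * W ≤ δ / (W + 1) * (W + 1) := by
        gcongr
        · exact ENNReal.toReal_le_of_le_ofReal ratio_pos.le hball.le
        · exact le_add_of_nonneg_right zero_le_one
    _ = δ := div_mul_cancel₀ δ (by positivity)

end Measure

section Plancherel

variable {E F : Type*} [NormedAddCommGroup E] [InnerProductSpace ℝ E] [FiniteDimensional ℝ E]
  [MeasurableSpace E] [BorelSpace E]

section

variable [NormedAddCommGroup F] [NormedSpace ℂ F]

theorem norm_fourier_le_integral_norm (f : E → F) (ξ : E) : ‖𝓕 f ξ‖ ≤ ∫ x, ‖f x‖ :=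
  VectorFourier.norm_fourierIntegral_le_integral_norm Real.fourierChar volume (innerₗ E) f ξ

theorem continuous_fourier {f : E → F} (hf : Integrable f) : Continuous (𝓕 f) :=
  VectorFourier.fourierIntegral_continuous Real.continuous_fourierChar continuous_inner hf

theorem fourier_comp_sub_right (f : E → F) (a ξ : E) :
    𝓕 (fun x => f (x - a)) ξ = Real.fourierChar (-⟪a, ξ⟫) • 𝓕 f ξ := by
  have h := congrFun (VectorFourier.fourierIntegral_comp_add_right Real.fourierChar
    (volume : Measure E) (innerₗ E) f (-a)) ξ
  simp only [Function.comp_def, ← sub_eq_add_neg, map_neg, LinearMap.neg_apply] at h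
  exact h

theorem fourier_smul_sub_comp_sub_right {f : E → F} (hf : Integrable f) (c : ℝ) (a ξ : E) :
    𝓕 (fun x => c • (f x - f (x - a))) ξ =
      (c • (1 - (Real.fourierChar (-⟪a, ξ⟫) : ℂ))) • 𝓕 f ξ := by
  have integrable_char {g : E → F} (hg : Integrable g) :
      Integrable fun x => Real.fourierChar (-⟪x, ξ⟫) • g x :=
    (Real.fourierIntegral_convergent_iff ξ).2 hg
  calc 𝓕 (fun x => c • (f x - f (x - a))) ξ
      = c • ∫ x, (Real.fourierChar (-⟪x, ξ⟫) • f x -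
          Real.fourierChar (-⟪x, ξ⟫) • f (x - a)) := by
        rw [← integral_smul, Real.fourier_eq]
        simp only [smul_comm _ c, smul_sub]
    _ = c • (𝓕 f ξ - 𝓕 (fun x => f (x - a)) ξ) := by
      rw [integral_sub (integrable_char hf) (integrable_char (hf.comp_sub_right a)),
        Real.fourier_eq, Real.fourier_eq]
    _ = (c • (1 - (Real.fourierChar (-⟪a, ξ⟫) : ℂ))) • 𝓕 f ξ := by
      rw [fourier_comp_sub_right, smul_assoc, sub_smul, one_smul, Circle.smul_def]

end

variable [NormedAddCommGroup F] [InnerProductSpace ℂ F] [CompleteSpace F]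

theorem coeFn_fourier_toLp {f : E → F} (hf₁ : Integrable f) (hf₂ : MemLp f 2) :
    (𝓕 (hf₂.toLp f) : Lp (α := E) F 2) =ᵐ[volume] 𝓕 f := by
  refine ae_eq_of_integral_contDiff_smul_eq ((Lp.memLp _).locallyIntegrable one_le_two)
    (continuous_fourier hf₁).locallyIntegrable fun g hg hgc => ?_
  let G : SchwartzMap E ℂ := (hgc.comp_left (g := Complex.ofReal) rfl).toSchwartzMap
    (Complex.ofRealCLM.contDiff.comp hg)
  have hG (x : E) : G x = g x := rfl
  have h := DFunLike.congr_fun (Lp.fourier_toTemperedDistribution_eq (hf₂.toLp f)) G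
  rw [TemperedDistribution.fourier_apply, Lp.toTemperedDistribution_apply,
    Lp.toTemperedDistribution_apply] at h
  simp only [hG, Complex.coe_smul] at h
  rw [← h]
  have h_selfAdjoint := VectorFourier.integral_fourierIntegral_smul_eq_flip
    (L := innerₗ E) Real.continuous_fourierChar continuous_inner
    (G.integrable (μ := volume)) hf₁
  rw [flip_innerₗ] at h_selfAdjoint
  calc ∫ x, 𝓕 G x • hf₂.toLp f x = ∫ x, 𝓕 G x • f x :=
        integral_congr_ae (hf₂.coeFn_toLp.mono fun x hx => by simp only [hx])
    _ = ∫ x, g x • 𝓕 f x := by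
      simp only [← Complex.coe_smul, ← hG]
      exact h_selfAdjoint

theorem memLp_two_fourier {f : E → F} (hf₁ : Integrable f) (hf₂ : MemLp f 2) :
    MemLp (𝓕 f) 2 :=
  (memLp_congr_ae (coeFn_fourier_toLp hf₁ hf₂)).1 (Lp.memLp _)

theorem integral_norm_sq_fourier {f : E → F} (hf₁ : Integrable f) (hf₂ : MemLp f 2) :
    ∫ ξ, ‖𝓕 f ξ‖ ^ 2 = ∫ x, ‖f x‖ ^ 2 := by
  have toLp_fourier : (memLp_two_fourier hf₁ hf₂).toLp (𝓕 f) = 𝓕 (hf₂.toLp f) :=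
    Lp.ext ((MemLp.coeFn_toLp _).trans (coeFn_fourier_toLp hf₁ hf₂).symm)
  rw [← norm_sq_toLp hf₂, ← Lp.norm_fourier_eq, ← toLp_fourier, norm_sq_toLp]

end Plancherel

section Uncertainty

variable {E F : Type*} [NormedAddCommGroup E] [InnerProductSpace ℝ E] [FiniteDimensional ℝ E]
  [MeasurableSpace E] [BorelSpace E] [NormedAddCommGroup F] [InnerProductSpace ℂ F]
  [CompleteSpace F]

theorem setIntegral_norm_sq_fourier_le {f : E → F} {A S : Set E} (hA : volume A ≠ ∞)
    (hS : volume S ≠ ∞) (hf : MemLp f 2) (hfS : Function.support f ⊆ S) :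
    ∫ ξ in A, ‖𝓕 f ξ‖ ^ 2 ≤ volume.real A * volume.real S * ∫ x, ‖f x‖ ^ 2 := by
  have hf₁ : Integrable f := integrable_of_memLp_two_of_support_subset hf hS hfS
  have sq_le (ξ : E) : ‖𝓕 f ξ‖ ^ 2 ≤ volume.real S * ∫ x, ‖f x‖ ^ 2 :=
    (pow_le_pow_left₀ (norm_nonneg _) (norm_fourier_le_integral_norm f ξ) 2).trans
      (sq_integral_norm_le hS hf hfS)
  calc ∫ ξ in A, ‖𝓕 f ξ‖ ^ 2 ≤ ∫ _ξ in A, volume.real S * ∫ x, ‖f x‖ ^ 2 :=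
        setIntegral_mono (memLp_two_fourier hf₁ hf).norm.integrable_sq.integrableOn
          (integrableOn_const hA) sq_le
    _ = volume.real A * volume.real S * ∫ x, ‖f x‖ ^ 2 := by
      rw [setIntegral_const, smul_eq_mul, mul_assoc]

theorem integral_norm_sq_le_setIntegral_compl_norm_sq_fourier {f : E → F} {A S : Set E}
    (hA : MeasurableSet A) (hAfin : volume A ≠ ∞) (hS : volume S ≠ ∞)
    (hAS : volume.real A * volume.real S ≤ 1 / 2) (hf : MemLp f 2)
    (hfS : Function.support f ⊆ S) :
    ∫ x, ‖f x‖ ^ 2 ≤ 2 * ∫ ξ in Aᶜ, ‖𝓕 f ξ‖ ^ 2 := by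
  have hf₁ : Integrable f := integrable_of_memLp_two_of_support_subset hf hS hfS
  have split : (∫ ξ in A, ‖𝓕 f ξ‖ ^ 2) + ∫ ξ in Aᶜ, ‖𝓕 f ξ‖ ^ 2 = ∫ x, ‖f x‖ ^ 2 := by
    rw [integral_add_compl hA (memLp_two_fourier hf₁ hf).norm.integrable_sq,
      integral_norm_sq_fourier hf₁ hf]
  have low_frequencies : ∫ ξ in A, ‖𝓕 f ξ‖ ^ 2 ≤ 1 / 2 * ∫ x, ‖f x‖ ^ 2 :=
    (setIntegral_norm_sq_fourier_le hAfin hS hf hfS).trans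
      (mul_le_mul_of_nonneg_right hAS (integral_nonneg fun x => by positivity))
  linarith

theorem mul_integral_norm_sq_le_integral_mul_norm_sq_fourier {f : E → F} {A S : Set E}
    (hA : MeasurableSet A) (hAfin : volume A ≠ ∞) (hS : volume S ≠ ∞)
    (hAS : volume.real A * volume.real S ≤ 1 / 2) (hf : MemLp f 2)
    (hfS : Function.support f ⊆ S) {m : E → ℝ} {a : ℝ} (ha : 0 ≤ a) (hm : ∀ ξ, 0 ≤ m ξ)
    (ham : ∀ ξ ∉ A, a ≤ m ξ) (hmf : Integrable fun ξ => m ξ * ‖𝓕 f ξ‖ ^ 2) :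
    a * ∫ x, ‖f x‖ ^ 2 ≤ 2 * ∫ ξ, m ξ * ‖𝓕 f ξ‖ ^ 2 := by
  have hf₁ : Integrable f := integrable_of_memLp_two_of_support_subset hf hS hfS
  have integrable_sq := (memLp_two_fourier hf₁ hf).norm.integrable_sq
  calc a * ∫ x, ‖f x‖ ^ 2 ≤ a * (2 * ∫ ξ in Aᶜ, ‖𝓕 f ξ‖ ^ 2) :=
        mul_le_mul_of_nonneg_left (integral_norm_sq_le_setIntegral_compl_norm_sq_fourier
          hA hAfin hS hAS hf hfS) ha
    _ = 2 * ∫ ξ in Aᶜ, a * ‖𝓕 f ξ‖ ^ 2 := by rw [integral_const_mul]; ring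
    _ ≤ 2 * ∫ ξ in Aᶜ, m ξ * ‖𝓕 f ξ‖ ^ 2 := by
      refine mul_le_mul_of_nonneg_left ?_ zero_le_two
      exact setIntegral_mono_on (integrable_sq.integrableOn.const_mul a) hmf.integrableOn hA.compl
        fun ξ hξ => mul_le_mul_of_nonneg_right (ham ξ hξ) (by positivity)
    _ ≤ 2 * ∫ ξ, m ξ * ‖𝓕 f ξ‖ ^ 2 := by
      refine mul_le_mul_of_nonneg_left ?_ zero_le_two
      exact setIntegral_le_integral hmf
        (ae_of_all _ fun ξ => mul_nonneg (hm ξ) (by positivity))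

end Uncertainty

section NonlocalDiff

theorem norm_sub_le_mul_min {E F : Type*} [SeminormedAddCommGroup E] [SeminormedAddCommGroup F]
    {U : E → F} {L : ℝ≥0} {M : ℝ} (hL : LipschitzWith L U) (hM : ∀ x, ‖U x‖ ≤ M) (x z : E) :
    ‖U x - U (x - z)‖ ≤ (L + 2 * M) * min 1 ‖z‖ := by
  have h_lip : ‖U x - U (x - z)‖ ≤ L * ‖z‖ := by
    simpa only [sub_sub_cancel] using hL.norm_sub_le x (x - z)
  have h_bdd : ‖U x - U (x - z)‖ ≤ 2 * M :=
    (norm_sub_le _ _).trans (by linarith [hM x, hM (x - z)])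
  have hM₀ : 0 ≤ M := (norm_nonneg _).trans (hM x)
  rcases le_total 1 ‖z‖ with hz | hz
  · rw [min_eq_left hz]
    linarith [L.coe_nonneg]
  · rw [min_eq_right hz]
    nlinarith [norm_nonneg z]

theorem norm_smul_sub_le {E F : Type*} [SeminormedAddCommGroup E] [SeminormedAddCommGroup F]
    [NormedSpace ℝ F] {U : E → F} {L : ℝ≥0} {M : ℝ} (K : E → ℝ) (hL : LipschitzWith L U)
    (hM : ∀ x, ‖U x‖ ≤ M) (x z : E) :
    ‖K z • (U x - U (x - z))‖ ≤ (L + 2 * M) * ‖min 1 ‖z‖ * K z‖ := by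
  calc ‖K z • (U x - U (x - z))‖ ≤ ‖K z‖ * ((L + 2 * M) * min 1 ‖z‖) := by
        rw [norm_smul]
        gcongr
        exact norm_sub_le_mul_min hL hM x z
    _ = (L + 2 * M) * ‖min 1 ‖z‖ * K z‖ := by
      rw [norm_mul, Real.norm_of_nonneg (by positivity : 0 ≤ min 1 ‖z‖)]
      ring

theorem lipschitzWith_fourierChar_inner {E : Type*} [NormedAddCommGroup E]
    [InnerProductSpace ℝ E] (ξ : E) :
    LipschitzWith (2 * NNReal.pi * ‖ξ‖₊) fun x : E => (Real.fourierChar ⟪x, ξ⟫ : ℂ) := by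
  refine LipschitzWith.of_dist_le_mul fun x y => ?_
  have factor : (Real.fourierChar ⟪x, ξ⟫ : ℂ) - Real.fourierChar ⟪y, ξ⟫ =
      Real.fourierChar ⟪y, ξ⟫ * (Real.fourierChar ⟪x - y, ξ⟫ - 1) := by
    rw [mul_sub, mul_one, ← Circle.coe_mul, ← AddChar.map_add_eq_mul, ← inner_add_left,
      add_sub_cancel]
  calc dist (Real.fourierChar ⟪x, ξ⟫ : ℂ) (Real.fourierChar ⟪y, ξ⟫)
      = ‖(Real.fourierChar ⟪x - y, ξ⟫ : ℂ) - 1‖ := by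
        rw [dist_eq_norm, factor, norm_mul, Circle.norm_coe, one_mul]
    _ ≤ ‖2 * Real.pi * ⟪x - y, ξ⟫‖ := by
      rw [Real.fourierChar_apply, mul_comm _ Complex.I]
      exact Real.norm_exp_I_mul_ofReal_sub_one_le
    _ ≤ 2 * Real.pi * (‖x - y‖ * ‖ξ‖) := by
      rw [norm_mul, Real.norm_of_nonneg Real.two_pi_pos.le]
      gcongr
      exact norm_inner_le_norm _ _
    _ = (2 * NNReal.pi * ‖ξ‖₊ : ℝ≥0) * dist x y := by
      push_cast
      rw [dist_eq_norm, NNReal.coe_real_pi]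
      ring

variable {E F : Type*} [NormedAddCommGroup E] [InnerProductSpace ℝ E] [FiniteDimensional ℝ E]
  [MeasurableSpace E] [BorelSpace E]

/-- Kernels with at most the singularity of a jump measure of finite variation: the weight
`min 1 ‖z‖` is the modulus of continuity of a bounded Lipschitz function, so
`∫ K z • (U x - U (x - z))` converges absolutely for such `U`. -/
def IsFiniteVariationKernel (K : E → ℝ) : Prop :=
  Integrable fun z => min 1 ‖z‖ * K z

/-- The nonlocal difference operator `U ↦ ∫ K z • (U (·) - U (· - z))` with kernel `K`. -/
def nonlocalDiff [NormedAddCommGroup F] [NormedSpace ℝ F] (K : E → ℝ) (U : E → F) (x : E) : F :=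
  ∫ z, K z • (U x - U (x - z))

/-- The Fourier symbol of `nonlocalDiff K`, for the transform with character `exp (-2πi⟪z, ξ⟫)`. -/
def nonlocalSymbol (K : E → ℝ) (ξ : E) : ℂ :=
  ∫ z, K z • (1 - (Real.fourierChar (-⟪z, ξ⟫) : ℂ))

theorem IsFiniteVariationKernel.aestronglyMeasurable {K : E → ℝ}
    (hK : IsFiniteVariationKernel K) : AEStronglyMeasurable K := by
  have decomposition : K = fun z => (min 1 ‖z‖)⁻¹ * (min 1 ‖z‖ * K z) +
      Set.indicator {0} (fun _ => K 0) z := by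
    ext z
    rcases eq_or_ne z 0 with rfl | hz
    · simp
    · have : min 1 ‖z‖ ≠ 0 := (lt_min one_pos (norm_pos_iff.2 hz)).ne'
      simp [hz, this]
  rw [decomposition]
  exact ((by fun_prop : Measurable fun z : E => (min 1 ‖z‖)⁻¹).aestronglyMeasurable.mul
    (Integrable.aestronglyMeasurable hK)).add
      (aestronglyMeasurable_const.indicator (measurableSet_singleton 0))

section

variable [NormedAddCommGroup F] [NormedSpace ℝ F] {K : E → ℝ} {U : E → F} {L : ℝ≥0} {M : ℝ}

theorem norm_nonlocalDiff_le (hK : IsFiniteVariationKernel K) (hL : LipschitzWith L U)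
    (hM : ∀ x, ‖U x‖ ≤ M) (x : E) :
    ‖nonlocalDiff K U x‖ ≤ ∫ z, (L + 2 * M) * ‖min 1 ‖z‖ * K z‖ :=
  norm_integral_le_of_norm_le ((Integrable.norm hK).const_mul _)
    (ae_of_all _ (norm_smul_sub_le K hL hM x))

theorem integrable_smul_sub (hK : IsFiniteVariationKernel K) (hL : LipschitzWith L U)
    (hM : ∀ x, ‖U x‖ ≤ M) (x : E) : Integrable fun z => K z • (U x - U (x - z)) := by
  have hU := hL.continuous
  exact ((Integrable.norm hK).const_mul _).mono'
    (hK.aestronglyMeasurable.smul (by fun_prop : Continuous _).aestronglyMeasurable)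
    (ae_of_all _ (norm_smul_sub_le K hL hM x))

theorem integrable_prod_smul_sub (hK : IsFiniteVariationKernel K) (hL : LipschitzWith L U)
    (hM : ∀ x, ‖U x‖ ≤ M) (hU : volume (Function.support U) ≠ ∞) :
    Integrable (fun p : E × E => K p.2 • (U p.1 - U (p.1 - p.2))) (volume.prod volume) := by
  have hUc := hL.continuous
  set χ : E → ℝ := (Function.support U).indicator 1
  have integrable_χ : Integrable χ := (integrable_indicator_iff
    hUc.isOpen_support.measurableSet).2 (integrableOn_const hU)
  have hK_norm : Integrable fun z => ‖min 1 ‖z‖ * K z‖ := Integrable.norm hK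
  refine (((integrable_χ.mul_prod hK_norm).add (hK_norm.convolution_integrand
    (ContinuousLinearMap.mul ℝ ℝ) integrable_χ)).const_mul (L + 2 * M)).mono' ?_
    (ae_of_all _ fun ⟨x, z⟩ => ?_)
  · exact hK.aestronglyMeasurable.comp_snd.smul (by fun_prop : Continuous _).aestronglyMeasurable
  · have hM₀ : 0 ≤ M := (norm_nonneg _).trans (hM x)
    have χ_nonneg (y : E) : 0 ≤ χ y := Set.indicator_nonneg (fun _ _ => zero_le_one) y
    have χ_eq_one {y : E} (hy : U y ≠ 0) : χ y = 1 :=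
      Set.indicator_of_mem (Function.mem_support.2 hy) 1
    by_cases h : U x = 0 ∧ U (x - z) = 0
    · simp only [h.1, h.2, sub_self, smul_zero, norm_zero]
      exact mul_nonneg (by positivity) (add_nonneg (mul_nonneg (χ_nonneg _) (norm_nonneg _))
        (mul_nonneg (norm_nonneg _) (χ_nonneg _)))
    have one_le : 1 ≤ χ x + χ (x - z) := by
      rcases not_and_or.1 h with hx | hxz
      · linarith [χ_eq_one hx, χ_nonneg (x - z)]
      · linarith [χ_eq_one hxz, χ_nonneg x]
    calc ‖K z • (U x - U (x - z))‖ ≤ (L + 2 * M) * (‖min 1 ‖z‖ * K z‖ * 1) := by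
          rw [mul_one]
          exact norm_smul_sub_le K hL hM x z
      _ ≤ (L + 2 * M) * (‖min 1 ‖z‖ * K z‖ * (χ x + χ (x - z))) := by gcongr
      _ = (L + 2 * M) * (χ x * ‖min 1 ‖z‖ * K z‖ + ‖min 1 ‖z‖ * K z‖ * χ (x - z)) := by ring

theorem integrable_nonlocalDiff (hK : IsFiniteVariationKernel K) (hL : LipschitzWith L U)
    (hM : ∀ x, ‖U x‖ ≤ M) (hU : volume (Function.support U) ≠ ∞) :
    Integrable (nonlocalDiff K U) :=
  (integrable_prod_smul_sub hK hL hM hU).integral_prod_left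

theorem memLp_two_nonlocalDiff (hK : IsFiniteVariationKernel K) (hL : LipschitzWith L U)
    (hM : ∀ x, ‖U x‖ ≤ M) (hU : volume (Function.support U) ≠ ∞) :
    MemLp (nonlocalDiff K U) 2 :=
  memLp_two_of_norm_le (integrable_nonlocalDiff hK hL hM hU) (norm_nonlocalDiff_le hK hL hM)

end

theorem nonlocalDiff_ofReal (K u : E → ℝ) (x : E) :
    nonlocalDiff K (fun y => (u y : ℂ)) x = (nonlocalDiff K u x : ℝ) := by
  simp only [nonlocalDiff, ← Complex.ofReal_sub, Complex.real_smul, ← Complex.ofReal_mul,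
    smul_eq_mul, integral_complex_ofReal]

theorem integrable_smul_one_sub_fourierChar {K : E → ℝ} (hK : IsFiniteVariationKernel K) (ξ : E) :
    Integrable fun z => K z • (1 - (Real.fourierChar (-⟪z, ξ⟫) : ℂ)) := by
  simpa using integrable_smul_sub hK (lipschitzWith_fourierChar_inner ξ)
    (fun x => (Circle.norm_coe _).le) 0

theorem im_nonlocalSymbol {K : E → ℝ} (hK : IsFiniteVariationKernel K) (ξ : E) :
    (nonlocalSymbol K ξ).im = ∫ z, Real.sin (2 * Real.pi * ⟪z, ξ⟫) * K z := by
  rw [nonlocalSymbol, ← RCLike.im_eq_complex_im,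
    ← integral_im (integrable_smul_one_sub_fourierChar hK ξ)]
  refine integral_congr_ae (ae_of_all _ fun z => ?_)
  simp only [RCLike.im_eq_complex_im, Complex.smul_im, Complex.sub_im, Complex.one_im,
    Real.fourierChar_apply, Complex.exp_ofReal_mul_I_im, mul_neg, Real.sin_neg, smul_eq_mul]
  ring

theorem fourier_nonlocalDiff [NormedAddCommGroup F] [NormedSpace ℂ F] [CompleteSpace F] {K : E → ℝ}
    {U : E → F} {L : ℝ≥0} {M : ℝ} (hK : IsFiniteVariationKernel K) (hL : LipschitzWith L U)
    (hM : ∀ x, ‖U x‖ ≤ M) (hU : volume (Function.support U) ≠ ∞) (ξ : E) :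
    𝓕 (nonlocalDiff K U) ξ = nonlocalSymbol K ξ • 𝓕 U ξ := by
  have integrable_U : Integrable U := memLp_one_iff_integrable.1 <|
    memLp_of_norm_le_of_support_subset hL.continuous.aestronglyMeasurable hM hU subset_rfl 1
  have integrable_prod : Integrable (fun p : E × E => Real.fourierChar (-⟪p.1, ξ⟫) • K p.2 •
      (U p.1 - U (p.1 - p.2))) (volume.prod volume) := by
    have h := integrable_prod_smul_sub hK hL hM hU
    refine h.mono (AEStronglyMeasurable.smul ?_ h.aestronglyMeasurable)
      (ae_of_all _ fun p => (Circle.norm_smul _ _).le)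
    exact (by fun_prop : Continuous _).aestronglyMeasurable
  calc 𝓕 (nonlocalDiff K U) ξ
      = ∫ x, ∫ z, Real.fourierChar (-⟪x, ξ⟫) • K z • (U x - U (x - z)) := by
        simp only [Real.fourier_eq, nonlocalDiff, Circle.smul_def, integral_smul]
    _ = ∫ z, (K z • (1 - (Real.fourierChar (-⟪z, ξ⟫) : ℂ))) • 𝓕 U ξ := by
      rw [integral_integral_swap integrable_prod]
      exact integral_congr_ae (ae_of_all _ fun z =>
        fourier_smul_sub_comp_sub_right integrable_U (K z) z ξ)
    _ = nonlocalSymbol K ξ • 𝓕 U ξ := by rw [integral_smul_const, nonlocalSymbol]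

theorem integral_norm_sq_nonlocalDiff [NormedAddCommGroup F] [InnerProductSpace ℂ F]
    [CompleteSpace F] {K : E → ℝ} {U : E → F} {L : ℝ≥0} {M : ℝ} (hK : IsFiniteVariationKernel K)
    (hL : LipschitzWith L U) (hM : ∀ x, ‖U x‖ ≤ M)
    (hU : volume (Function.support U) ≠ ∞) :
    ∫ x, ‖nonlocalDiff K U x‖ ^ 2 = ∫ ξ, ‖nonlocalSymbol K ξ‖ ^ 2 * ‖𝓕 U ξ‖ ^ 2 := by
  rw [← integral_norm_sq_fourier (integrable_nonlocalDiff hK hL hM hU)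
    (memLp_two_nonlocalDiff hK hL hM hU)]
  simp only [fourier_nonlocalDiff hK hL hM hU, norm_smul, mul_pow]

theorem integrable_norm_sq_nonlocalSymbol_mul [NormedAddCommGroup F] [InnerProductSpace ℂ F]
    [CompleteSpace F] {K : E → ℝ} {U : E → F} {L : ℝ≥0} {M : ℝ} (hK : IsFiniteVariationKernel K)
    (hL : LipschitzWith L U) (hM : ∀ x, ‖U x‖ ≤ M)
    (hU : volume (Function.support U) ≠ ∞) :
    Integrable fun ξ => ‖nonlocalSymbol K ξ‖ ^ 2 * ‖𝓕 U ξ‖ ^ 2 := by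
  have h := (memLp_two_fourier (integrable_nonlocalDiff hK hL hM hU)
    (memLp_two_nonlocalDiff hK hL hM hU)).norm.integrable_sq
  simpa only [fourier_nonlocalDiff hK hL hM hU, norm_smul, mul_pow] using h

end NonlocalDiff

section RieszKernel

theorem integrable_min_one_norm_mul_inv_rpow {E : Type*} [NormedAddCommGroup E] [NormedSpace ℝ E]
    [FiniteDimensional ℝ E] [Nontrivial E] [MeasurableSpace E] [BorelSpace E] (μ : Measure E)
    [μ.IsAddHaarMeasure] {s : ℝ} (hs : s ∈ Set.Ioo (0 : ℝ) 1) :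
    Integrable (fun z => min 1 ‖z‖ * (‖z‖ ^ (Module.finrank ℝ E + s))⁻¹) μ := by
  rw [integrable_fun_norm_addHaar μ
    (f := fun r : ℝ => min 1 r * (r ^ (Module.finrank ℝ E + s))⁻¹),
    ← Set.Ioc_union_Ioi_eq_Ioi (zero_le_one (α := ℝ)), integrableOn_union]
  have radial_power {r : ℝ} (hr : 0 < r) :
      r ^ (Module.finrank ℝ E - 1) * (r ^ (Module.finrank ℝ E + s))⁻¹ = r ^ (-1 - s) := by
    rw [← Real.rpow_neg hr.le, ← Real.rpow_natCast, ← Real.rpow_add hr,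
      Nat.cast_sub Module.finrank_pos, Nat.cast_one]
    ring_nf
  constructor
  · have integrable_near_zero : IntegrableOn (fun r : ℝ => r ^ (-s)) (Set.Ioc 0 1) := by
      rw [← intervalIntegrable_iff_integrableOn_Ioc_of_le zero_le_one]
      exact intervalIntegral.intervalIntegrable_rpow' (by linarith [hs.2])
    refine integrable_near_zero.congr_fun (fun r hr => ?_) measurableSet_Ioc
    rw [min_eq_right hr.2, smul_eq_mul, mul_left_comm, radial_power hr.1,
      ← Real.rpow_one_add' hr.1.le (by linarith [hs.1])]
    ring_nf
  · refine (integrableOn_Ioi_rpow_of_lt (by linarith [hs.1] : -1 - s < -1) one_pos).congr_fun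
      (fun r (hr : 1 < r) => ?_) measurableSet_Ioi
    rw [min_eq_left hr.le, smul_eq_mul, mul_left_comm, radial_power (by linarith), one_mul]

theorem abs_sin_inner_le {E : Type*} [NormedAddCommGroup E] [InnerProductSpace ℝ E] (z ξ : E) :
    |Real.sin (2 * Real.pi * ⟪z, ξ⟫)| ≤ (1 + 2 * Real.pi * ‖ξ‖) * min 1 ‖z‖ := by
  rcases le_total 1 ‖z‖ with hz | hz
  · rw [min_eq_left hz, mul_one]
    exact (Real.abs_sin_le_one _).trans (le_add_of_nonneg_right (by positivity))
  · rw [min_eq_right hz]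
    calc |Real.sin (2 * Real.pi * ⟪z, ξ⟫)| ≤ |2 * Real.pi * ⟪z, ξ⟫| := Real.abs_sin_le_abs
      _ = 2 * Real.pi * |⟪z, ξ⟫| := by rw [abs_mul, abs_of_pos Real.two_pi_pos]
      _ ≤ 2 * Real.pi * (‖z‖ * ‖ξ‖) := by
        gcongr
        exact abs_real_inner_le_norm z ξ
      _ ≤ (1 + 2 * Real.pi * ‖ξ‖) * ‖z‖ := by linarith [norm_nonneg z]

theorem one_sub_cos_inner_le {E : Type*} [NormedAddCommGroup E] [InnerProductSpace ℝ E] (z ξ : E) :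
    1 - Real.cos (2 * Real.pi * ⟪z, ξ⟫) ≤ (2 + 2 * Real.pi ^ 2 * ‖ξ‖ ^ 2) * (min 1 ‖z‖ * ‖z‖) := by
  rcases le_total 1 ‖z‖ with hz | hz
  · rw [min_eq_left hz, one_mul]
    calc 1 - Real.cos (2 * Real.pi * ⟪z, ξ⟫) ≤ 2 * 1 := by
          linarith [Real.neg_one_le_cos (2 * Real.pi * ⟪z, ξ⟫)]
      _ ≤ (2 + 2 * Real.pi ^ 2 * ‖ξ‖ ^ 2) * ‖z‖ := by
        gcongr
        exact le_add_of_nonneg_right (by positivity)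
  · rw [min_eq_right hz]
    have inner_sq_le : ⟪z, ξ⟫ ^ 2 ≤ (‖z‖ * ‖ξ‖) ^ 2 :=
      sq_le_sq.2 ((abs_real_inner_le_norm z ξ).trans (le_abs_self _))
    calc 1 - Real.cos (2 * Real.pi * ⟪z, ξ⟫) ≤ 2 * Real.pi ^ 2 * ⟪z, ξ⟫ ^ 2 := by
          linarith [Real.one_sub_sq_div_two_le_cos (x := 2 * Real.pi * ⟪z, ξ⟫)]
      _ ≤ 2 * Real.pi ^ 2 * (‖z‖ * ‖ξ‖) ^ 2 := by gcongr
      _ ≤ (2 + 2 * Real.pi ^ 2 * ‖ξ‖ ^ 2) * (‖z‖ * ‖z‖) := by linarith [mul_self_nonneg ‖z‖]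

variable {E : Type*} [NormedAddCommGroup E] [InnerProductSpace ℝ E]

/-- The radial singularity `|z|^{-(d+s+1)}` of the Riesz fractional gradient, `d = dim E`. -/
def rieszKernel (s : ℝ) (z : E) : ℝ :=
  (‖z‖ ^ (Module.finrank ℝ E + s + 1))⁻¹

/-- The component along `v` of the vector kernel `z / |z|^{d+s+1}`: `nonlocalDiff` with this kernel
is, up to `μ_s`, the component along `v` of the Riesz fractional gradient. -/
def directionalRieszKernel (s : ℝ) (v z : E) : ℝ :=
  ⟪v, z⟫ * rieszKernel s z

/-- The characteristic exponent of the isotropic stable process of index `1 + s`, equivalently the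
Fourier multiplier of `(-Δ)^((1+s)/2)`, up to a positive factor. -/
def stableExponent [FiniteDimensional ℝ E] [MeasurableSpace E] [BorelSpace E] (s : ℝ) (ξ : E) : ℝ :=
  ∫ z, (1 - Real.cos (2 * Real.pi * ⟪z, ξ⟫)) * rieszKernel s z

theorem rieszKernel_nonneg (s : ℝ) (z : E) : 0 ≤ rieszKernel s z := by
  unfold rieszKernel
  positivity

theorem rieszKernel_smul (s : ℝ) {r : ℝ} (hr : 0 ≤ r) (z : E) :
    rieszKernel s (r • z) = (r ^ (Module.finrank ℝ E + s + 1))⁻¹ * rieszKernel s z := by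
  rw [rieszKernel, rieszKernel, norm_smul, Real.norm_of_nonneg hr,
    Real.mul_rpow hr (norm_nonneg _), mul_inv]

theorem norm_mul_rieszKernel {s : ℝ} (hs : 0 < s) (z : E) :
    ‖z‖ * rieszKernel s z = (‖z‖ ^ (Module.finrank ℝ E + s))⁻¹ := by
  rw [rieszKernel, Real.rpow_add_one' (norm_nonneg z) (by positivity)]
  rcases eq_or_ne z 0 with rfl | hz
  · rw [norm_zero, zero_mul, Real.zero_rpow (by positivity), inv_zero]
  · have := norm_ne_zero_iff.2 hz
    field_simp

theorem norm_sin_inner_mul_directionalRieszKernel_le (s : ℝ) (v ξ z : E) :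
    ‖Real.sin (2 * Real.pi * ⟪z, ξ⟫) * directionalRieszKernel s v z‖ ≤
      (1 + 2 * Real.pi * ‖ξ‖) * ‖v‖ * (min 1 ‖z‖ * (‖z‖ * rieszKernel s z)) := by
  have := rieszKernel_nonneg s z
  rw [directionalRieszKernel, norm_mul, norm_mul, Real.norm_of_nonneg this, Real.norm_eq_abs]
  calc |Real.sin (2 * Real.pi * ⟪z, ξ⟫)| * (‖⟪v, z⟫‖ * rieszKernel s z)
      ≤ (1 + 2 * Real.pi * ‖ξ‖) * min 1 ‖z‖ * (‖v‖ * ‖z‖ * rieszKernel s z) := by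
        gcongr
        · exact abs_sin_inner_le z ξ
        · exact norm_inner_le_norm v z
    _ = (1 + 2 * Real.pi * ‖ξ‖) * ‖v‖ * (min 1 ‖z‖ * (‖z‖ * rieszKernel s z)) := by ring

variable [MeasurableSpace E] [BorelSpace E]

theorem measurable_rieszKernel (s : ℝ) : Measurable (rieszKernel s : E → ℝ) := by
  unfold rieszKernel
  fun_prop

variable [FiniteDimensional ℝ E]

theorem isFiniteVariationKernel_norm_mul_rieszKernel [Nontrivial E] {s : ℝ}
    (hs : s ∈ Set.Ioo (0 : ℝ) 1) : IsFiniteVariationKernel fun z : E => ‖z‖ * rieszKernel s z := by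
  simp only [IsFiniteVariationKernel, norm_mul_rieszKernel hs.1]
  exact integrable_min_one_norm_mul_inv_rpow volume hs

theorem isFiniteVariationKernel_directionalRieszKernel [Nontrivial E] {s : ℝ}
    (hs : s ∈ Set.Ioo (0 : ℝ) 1) (v : E) :
    IsFiniteVariationKernel (directionalRieszKernel s v) := by
  refine ((isFiniteVariationKernel_norm_mul_rieszKernel hs).const_mul ‖v‖).mono' ?_
    (ae_of_all _ fun z => ?_)
  · have := measurable_rieszKernel (E := E) s
    unfold directionalRieszKernel
    fun_prop
  · have := rieszKernel_nonneg s z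
    rw [directionalRieszKernel, norm_mul, norm_mul, Real.norm_of_nonneg this,
      Real.norm_of_nonneg (by positivity : 0 ≤ min 1 ‖z‖)]
    calc min 1 ‖z‖ * (‖⟪v, z⟫‖ * rieszKernel s z)
        ≤ min 1 ‖z‖ * (‖v‖ * ‖z‖ * rieszKernel s z) := by
          gcongr
          exact norm_inner_le_norm v z
      _ = ‖v‖ * (min 1 ‖z‖ * (‖z‖ * rieszKernel s z)) := by ring

theorem integrable_one_sub_cos_mul_rieszKernel [Nontrivial E] {s : ℝ}
    (hs : s ∈ Set.Ioo (0 : ℝ) 1) (ξ : E) :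
    Integrable fun z => (1 - Real.cos (2 * Real.pi * ⟪z, ξ⟫)) * rieszKernel s z := by
  refine ((isFiniteVariationKernel_norm_mul_rieszKernel hs).const_mul
    (2 + 2 * Real.pi ^ 2 * ‖ξ‖ ^ 2)).mono' ?_ (ae_of_all _ fun z => ?_)
  · have := measurable_rieszKernel (E := E) s
    fun_prop
  · have := rieszKernel_nonneg s z
    rw [norm_mul, Real.norm_of_nonneg this,
      Real.norm_of_nonneg (sub_nonneg.2 (Real.cos_le_one _)), ← mul_assoc (min 1 ‖z‖), ← mul_assoc]
    gcongr
    exact one_sub_cos_inner_le z ξ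

theorem stableExponent_smul (s : ℝ) {r : ℝ} (hr : 0 < r) (ξ : E) :
    stableExponent s (r • ξ) = r ^ (1 + s) * stableExponent s ξ := by
  have rescaled := Measure.integral_comp_smul (volume : Measure E)
    (fun z => (1 - Real.cos (2 * Real.pi * ⟪z, ξ⟫)) * rieszKernel s z) r
  simp only [rieszKernel_smul s hr.le, real_inner_smul_left, mul_left_comm _ (_⁻¹),
    integral_const_mul, smul_eq_mul, abs_of_pos (inv_pos.2 (pow_pos hr _))] at rescaled
  have rpow_split : r ^ (Module.finrank ℝ E + s + 1) = r ^ Module.finrank ℝ E * r ^ (1 + s) := by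
    rw [← Real.rpow_natCast, ← Real.rpow_add hr, add_assoc, add_comm s]
  have := pow_pos hr (Module.finrank ℝ E)
  have := Real.rpow_pos_of_pos hr (1 + s)
  rw [rpow_split, inv_mul_eq_iff_eq_mul₀ (by positivity)] at rescaled
  simp only [stableExponent, real_inner_smul_right]
  rw [rescaled]
  field_simp

theorem stableExponent_eq_of_norm_eq (s : ℝ) {ξ η : E} (h : ‖ξ‖ = ‖η‖) :
    stableExponent s ξ = stableExponent s η := by
  set R := (Submodule.span ℝ {ξ - η})ᗮ.reflection
  have reflection_ξ : R ξ = η := Submodule.reflection_sub h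
  rw [stableExponent, stableExponent,
    ← R.measurePreserving.integral_comp R.toHomeomorph.measurableEmbedding
      (fun z => (1 - Real.cos (2 * Real.pi * ⟪z, η⟫)) * rieszKernel s z)]
  simp only [← reflection_ξ, rieszKernel, LinearIsometryEquiv.inner_map_map,
    LinearIsometryEquiv.norm_map]

theorem stableExponent_pos [Nontrivial E] {s : ℝ} (hs : s ∈ Set.Ioo (0 : ℝ) 1) {ξ : E}
    (hξ : ξ ≠ 0) : 0 < stableExponent s ξ := by
  have integrand_nonneg (z : E) :
      0 ≤ (1 - Real.cos (2 * Real.pi * ⟪z, ξ⟫)) * rieszKernel s z :=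
    mul_nonneg (sub_nonneg.2 (Real.cos_le_one _)) (rieszKernel_nonneg s z)
  let V : Set E := {z | Real.cos (2 * Real.pi * ⟪z, ξ⟫) < 1} ∩ {0}ᶜ
  have hV : IsOpen V := (isOpen_lt (by fun_prop) (by fun_prop)).inter isOpen_compl_singleton
  have V_nonempty : V.Nonempty := by
    have := norm_pos_iff.2 hξ
    refine ⟨(2 * ‖ξ‖ ^ 2)⁻¹ • ξ, ?_, smul_ne_zero (by positivity) hξ⟩
    have : 2 * Real.pi * ((2 * ‖ξ‖ ^ 2)⁻¹ * ‖ξ‖ ^ 2) = Real.pi := by field_simp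
    simp only [Set.mem_ofPred_eq, real_inner_smul_left, real_inner_self_eq_norm_sq, this,
      Real.cos_pi]
    norm_num
  refine (integral_pos_iff_support_of_nonneg integrand_nonneg
    (integrable_one_sub_cos_mul_rieszKernel hs ξ)).2 ((hV.measure_pos volume V_nonempty).trans_le
      (measure_mono ?_))
  rintro z ⟨hcos : Real.cos (2 * Real.pi * ⟪z, ξ⟫) < 1, hz : z ≠ 0⟩
  have : 0 < rieszKernel s z := by
    have := norm_pos_iff.2 hz
    unfold rieszKernel
    positivity
  exact (mul_pos (sub_pos.2 hcos) this).ne'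

theorem hasDerivAt_stableExponent_smul [Nontrivial E] {s : ℝ} (hs : s ∈ Set.Ioo (0 : ℝ) 1)
    (ξ : E) :
    HasDerivAt (fun r : ℝ => stableExponent s (r • ξ))
      (2 * Real.pi * ∫ z, Real.sin (2 * Real.pi * ⟪z, ξ⟫) * directionalRieszKernel s ξ z) 1 := by
  have hκ := measurable_rieszKernel (E := E) s
  have hasDerivAt_integrand (z : E) (r : ℝ) :
      HasDerivAt (fun r : ℝ => (1 - Real.cos (2 * Real.pi * ⟪z, r • ξ⟫)) * rieszKernel s z)
        (2 * Real.pi * (Real.sin (2 * Real.pi * ⟪z, r • ξ⟫) * directionalRieszKernel s ξ z)) r := by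
    simp only [real_inner_smul_right, directionalRieszKernel]
    have phase : HasDerivAt (fun r : ℝ => 2 * Real.pi * (r * ⟪z, ξ⟫))
        (2 * Real.pi * (1 * ⟪z, ξ⟫)) r := ((hasDerivAt_id r).mul_const _).const_mul _
    refine ((phase.cos.const_sub 1).mul_const (rieszKernel s z)).congr_deriv ?_
    rw [real_inner_comm]
    ring
  have differentiated := hasDerivAt_integral_of_dominated_loc_of_deriv_le
    (μ := (volume : Measure E)) (s := Set.Ioo (0 : ℝ) 2) (x₀ := (1 : ℝ))
    (bound := fun z => 2 * Real.pi * ((1 + 2 * Real.pi * (2 * ‖ξ‖)) * ‖ξ‖ *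
      (min 1 ‖z‖ * (‖z‖ * rieszKernel s z))))
    (Ioo_mem_nhds one_pos one_lt_two) (Eventually.of_forall fun r => by fun_prop)
    (by simpa only [one_smul] using integrable_one_sub_cos_mul_rieszKernel hs ξ)
    (by unfold directionalRieszKernel; fun_prop)
    (ae_of_all _ fun z r hr => ?_)
    (((isFiniteVariationKernel_norm_mul_rieszKernel hs).const_mul _).const_mul _)
    (ae_of_all _ fun z r _ => hasDerivAt_integrand z r)
  · simpa only [stableExponent, one_smul, integral_const_mul] using differentiated.2
  · have := rieszKernel_nonneg s z
    have norm_smul_le : ‖r • ξ‖ ≤ 2 * ‖ξ‖ := by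
      rw [norm_smul, Real.norm_of_nonneg hr.1.le]
      gcongr
      exact hr.2.le
    rw [norm_mul, Real.norm_of_nonneg Real.two_pi_pos.le]
    refine mul_le_mul_of_nonneg_left
      ((norm_sin_inner_mul_directionalRieszKernel_le s ξ (r • ξ) z).trans ?_) Real.two_pi_pos.le
    gcongr

-- Euler's identity `⟪ξ, ∇P(ξ)⟫ = (1 + s) P(ξ)` for the homogeneous function `P = stableExponent s`.
theorem two_pi_mul_integral_sin_inner_mul_directionalRieszKernel [Nontrivial E] {s : ℝ}
    (hs : s ∈ Set.Ioo (0 : ℝ) 1) (ξ : E) :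
    2 * Real.pi * ∫ z, Real.sin (2 * Real.pi * ⟪z, ξ⟫) * directionalRieszKernel s ξ z =
      (1 + s) * stableExponent s ξ := by
  have homogeneous : (fun r : ℝ => stableExponent s (r • ξ)) =ᶠ[𝓝 1]
      fun r => r ^ (1 + s) * stableExponent s ξ := by
    filter_upwards [lt_mem_nhds one_pos] with r hr using stableExponent_smul s hr ξ
  have power_rule : HasDerivAt (fun r : ℝ => r ^ (1 + s) * stableExponent s ξ)
      ((1 + s) * stableExponent s ξ) 1 := by
    simpa using (Real.hasDerivAt_rpow_const (p := 1 + s) (Or.inl one_ne_zero)).mul_const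
      (stableExponent s ξ)
  exact (hasDerivAt_stableExponent_smul hs ξ).unique (power_rule.congr_of_eventuallyEq homogeneous)

theorem exists_pos_mul_norm_rpow_le_norm_nonlocalSymbol [Nontrivial E] {s : ℝ}
    (hs : s ∈ Set.Ioo (0 : ℝ) 1) :
    ∃ c > 0, ∀ ξ : E,
      c * ‖ξ‖ ^ (1 + s) ≤ ‖nonlocalSymbol (directionalRieszKernel s ξ) ξ‖ := by
  obtain ⟨e, he⟩ := exists_norm_eq E zero_le_one
  have hs₀ := hs.1
  have exponent_pos : 0 < stableExponent s e :=
    stableExponent_pos hs (norm_ne_zero_iff.1 (he ▸ one_ne_zero))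
  refine ⟨(1 + s) * stableExponent s e / (2 * Real.pi), by positivity, fun ξ => ?_⟩
  rcases eq_or_ne ξ 0 with rfl | hξ
  · rw [norm_zero, Real.zero_rpow (by positivity), mul_zero]
    exact norm_nonneg _
  have exponent_eq : stableExponent s ξ = ‖ξ‖ ^ (1 + s) * stableExponent s e := by
    rw [← stableExponent_smul s (norm_pos_iff.2 hξ)]
    exact stableExponent_eq_of_norm_eq s (by rw [norm_smul, norm_norm, he, mul_one])
  calc (1 + s) * stableExponent s e / (2 * Real.pi) * ‖ξ‖ ^ (1 + s)
      = (1 + s) * stableExponent s ξ / (2 * Real.pi) := by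
        rw [exponent_eq]
        ring
    _ = (nonlocalSymbol (directionalRieszKernel s ξ) ξ).im := by
      rw [im_nonlocalSymbol (isFiniteVariationKernel_directionalRieszKernel hs ξ),
        ← two_pi_mul_integral_sin_inner_mul_directionalRieszKernel hs,
        mul_div_cancel_left₀ _ Real.two_pi_pos.ne']
    _ ≤ ‖nonlocalSymbol (directionalRieszKernel s ξ) ξ‖ :=
      (le_abs_self _).trans (Complex.abs_im_le_norm _)

theorem nonlocalSymbol_directionalRieszKernel_eq_sum [Nontrivial E] {ι : Type*} [Fintype ι]
    (b : OrthonormalBasis ι ℝ E) {s : ℝ} (hs : s ∈ Set.Ioo (0 : ℝ) 1) (v ξ : E) :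
    nonlocalSymbol (directionalRieszKernel s v) ξ =
      ∑ j, ⟪v, b j⟫ • nonlocalSymbol (directionalRieszKernel s (b j)) ξ := by
  have integrable_component (j : ι) : Integrable fun z =>
      ⟪v, b j⟫ • directionalRieszKernel s (b j) z • (1 - (Real.fourierChar (-⟪z, ξ⟫) : ℂ)) :=
    Integrable.smul ⟪v, b j⟫ (integrable_smul_one_sub_fourierChar
      (isFiniteVariationKernel_directionalRieszKernel hs (b j)) ξ)
  simp only [nonlocalSymbol, ← integral_smul]
  rw [← integral_finsetSum _ fun j _ => integrable_component j]
  refine integral_congr_ae (ae_of_all _ fun z => ?_)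
  simp only [directionalRieszKernel, ← b.sum_inner_mul_inner v z, Finset.sum_mul, Finset.sum_smul,
    smul_smul, mul_assoc]

theorem norm_sq_nonlocalSymbol_directionalRieszKernel_le [Nontrivial E] {ι : Type*} [Fintype ι]
    (b : OrthonormalBasis ι ℝ E) {s : ℝ} (hs : s ∈ Set.Ioo (0 : ℝ) 1) (v ξ : E) :
    ‖nonlocalSymbol (directionalRieszKernel s v) ξ‖ ^ 2 ≤
      ‖v‖ ^ 2 * ∑ j, ‖nonlocalSymbol (directionalRieszKernel s (b j)) ξ‖ ^ 2 := by
  rw [nonlocalSymbol_directionalRieszKernel_eq_sum b hs, ← b.sum_sq_norm_inner_left v]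
  calc ‖∑ j, ⟪v, b j⟫ • nonlocalSymbol (directionalRieszKernel s (b j)) ξ‖ ^ 2
      ≤ (∑ j, ‖⟪v, b j⟫‖ * ‖nonlocalSymbol (directionalRieszKernel s (b j)) ξ‖) ^ 2 := by
        gcongr
        exact norm_sum_le_of_le _ fun j _ => norm_smul_le _ _
    _ ≤ _ := Finset.sum_mul_sq_le_sq_mul_sq _ _ _

/-- The squared norm of the Fourier symbol of the vector operator with kernel `z / |z|^{d+s+1}`,
computed in the orthonormal basis `b`; up to `μ_s²` it is that of the Riesz fractional gradient. -/
def rieszSymbolNormSq {ι : Type*} [Fintype ι] (b : OrthonormalBasis ι ℝ E) (s : ℝ) (ξ : E) : ℝ :=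
  ∑ j, ‖nonlocalSymbol (directionalRieszKernel s (b j)) ξ‖ ^ 2

theorem rieszSymbolNormSq_nonneg {ι : Type*} [Fintype ι] (b : OrthonormalBasis ι ℝ E) (s : ℝ)
    (ξ : E) : 0 ≤ rieszSymbolNormSq b s ξ :=
  Finset.sum_nonneg fun _ _ => by positivity

theorem exists_pos_mul_norm_rpow_le_rieszSymbolNormSq [Nontrivial E] {ι : Type*}
    [Fintype ι] (b : OrthonormalBasis ι ℝ E) {s : ℝ} (hs : s ∈ Set.Ioo (0 : ℝ) 1) :
    ∃ c > 0, ∀ ξ : E, c * ‖ξ‖ ^ (2 * s) ≤ rieszSymbolNormSq b s ξ := by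
  obtain ⟨c, hc, lower_bound⟩ := exists_pos_mul_norm_rpow_le_norm_nonlocalSymbol (E := E) hs
  refine ⟨c ^ 2, by positivity, fun ξ => ?_⟩
  rcases eq_or_ne ξ 0 with rfl | hξ
  · rw [norm_zero, Real.zero_rpow (by linarith [hs.1]), mul_zero]
    exact rieszSymbolNormSq_nonneg b s 0
  have norm_ξ_pos := norm_pos_iff.2 hξ
  refine le_of_mul_le_mul_left ?_ (pow_pos norm_ξ_pos 2)
  calc ‖ξ‖ ^ 2 * (c ^ 2 * ‖ξ‖ ^ (2 * s)) = (c * ‖ξ‖ ^ (1 + s)) ^ 2 := by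
        rw [Real.rpow_add norm_ξ_pos, Real.rpow_one, mul_comm 2 s, Real.rpow_mul norm_ξ_pos.le,
          Real.rpow_two]
        ring
    _ ≤ ‖nonlocalSymbol (directionalRieszKernel s ξ) ξ‖ ^ 2 := by
      gcongr
      exact lower_bound ξ
    _ ≤ _ := norm_sq_nonlocalSymbol_directionalRieszKernel_le b hs ξ ξ

theorem integrable_rieszSymbolNormSq_mul [Nontrivial E] {ι F : Type*} [Fintype ι]
    [NormedAddCommGroup F] [InnerProductSpace ℂ F] [CompleteSpace F] (b : OrthonormalBasis ι ℝ E)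
    {s : ℝ} (hs : s ∈ Set.Ioo (0 : ℝ) 1) {U : E → F} {L : ℝ≥0} {M : ℝ} (hL : LipschitzWith L U)
    (hM : ∀ x, ‖U x‖ ≤ M) (hU : volume (Function.support U) ≠ ∞) :
    Integrable fun ξ => rieszSymbolNormSq b s ξ * ‖𝓕 U ξ‖ ^ 2 := by
  simp only [rieszSymbolNormSq, Finset.sum_mul]
  exact integrable_finsetSum _ fun j _ => integrable_norm_sq_nonlocalSymbol_mul
    (isFiniteVariationKernel_directionalRieszKernel hs (b j)) hL hM hU

end RieszKernel

section FracGrad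

variable {d : ℕ} {s : ℝ}

theorem lipschitzWith_ofReal_comp {X : Type*} [PseudoEMetricSpace X] {u : X → ℝ} {L : ℝ≥0}
    (hL : LipschitzWith L u) : LipschitzWith L fun x => (u x : ℂ) :=
  (Complex.isometry_ofReal.lipschitz.comp hL).weaken (one_mul L).le

theorem support_ofReal_comp {X : Type*} (u : X → ℝ) :
    (Function.support fun x => (u x : ℂ)) = Function.support u :=
  Function.support_comp_eq _ Complex.ofReal_eq_zero u

theorem muS_pos (d : ℕ) (hs : s ∈ Set.Ioo (0 : ℝ) 1) : 0 < muS d s := by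
  have hs₀ := hs.1
  have hs₁ : 0 < 1 - s := sub_pos.2 hs.2
  have := Real.Gamma_pos_of_pos (s := ((d : ℝ) + s + 1) / 2) (by positivity)
  have := Real.Gamma_pos_of_pos (s := (1 - s) / 2) (by positivity)
  unfold muS
  positivity

theorem fracGrad_eq_smul_integral_rieszKernel (d : ℕ) (s : ℝ) (u : EuclideanSpace ℝ (Fin d) → ℝ)
    (x : EuclideanSpace ℝ (Fin d)) :
    fracGrad d s u x = muS d s • ∫ z, rieszKernel s z • (u x - u (x - z)) • z := by
  rw [fracGrad, ← integral_sub_left_eq_self _ volume x]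
  simp only [sub_sub_cancel, rieszKernel, finrank_euclideanSpace, Fintype.card_fin]

variable [NeZero d] {u : EuclideanSpace ℝ (Fin d) → ℝ} {L : ℝ≥0} {M : ℝ}

theorem integrable_rieszKernel_smul_sub_smul (hs : s ∈ Set.Ioo (0 : ℝ) 1)
    (hL : LipschitzWith L u) (hM : ∀ x, ‖u x‖ ≤ M) (x : EuclideanSpace ℝ (Fin d)) :
    Integrable fun z => rieszKernel s z • (u x - u (x - z)) • z := by
  have hu := hL.continuous
  have hκ := measurable_rieszKernel (E := EuclideanSpace ℝ (Fin d)) s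
  refine (integrable_smul_sub (isFiniteVariationKernel_norm_mul_rieszKernel hs) hL hM x).mono
    (by fun_prop) (ae_of_all _ fun z => le_of_eq ?_)
  simp only [norm_smul, norm_mul, norm_norm]
  ring

theorem inner_fracGrad (hs : s ∈ Set.Ioo (0 : ℝ) 1) (hL : LipschitzWith L u)
    (hM : ∀ x, ‖u x‖ ≤ M) (v x : EuclideanSpace ℝ (Fin d)) :
    ⟪v, fracGrad d s u x⟫ = muS d s * nonlocalDiff (directionalRieszKernel s v) u x := by
  rw [fracGrad_eq_smul_integral_rieszKernel, real_inner_smul_right,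
    ← integral_inner (integrable_rieszKernel_smul_sub_smul hs hL hM x), nonlocalDiff]
  simp only [real_inner_smul_right, directionalRieszKernel, smul_eq_mul]
  congr! 3
  ring

variable {ι : Type*} [Fintype ι] (b : OrthonormalBasis ι ℝ (EuclideanSpace ℝ (Fin d)))

theorem norm_sq_fracGrad (hs : s ∈ Set.Ioo (0 : ℝ) 1) (hL : LipschitzWith L u)
    (hM : ∀ x, ‖u x‖ ≤ M) (x : EuclideanSpace ℝ (Fin d)) :
    ‖fracGrad d s u x‖ ^ 2 =
      muS d s ^ 2 * ∑ j, ‖nonlocalDiff (directionalRieszKernel s (b j)) u x‖ ^ 2 := by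
  rw [← b.sum_sq_norm_inner_right, Finset.mul_sum]
  simp only [inner_fracGrad hs hL hM, Real.norm_eq_abs, sq_abs, mul_pow]

theorem integral_norm_sq_fracGrad (hs : s ∈ Set.Ioo (0 : ℝ) 1) (hL : LipschitzWith L u)
    (hM : ∀ x, ‖u x‖ ≤ M) (hu : volume (Function.support u) ≠ ∞) :
    ∫ x, ‖fracGrad d s u x‖ ^ 2 =
      muS d s ^ 2 * ∫ ξ, rieszSymbolNormSq b s ξ * ‖𝓕 (fun x => (u x : ℂ)) ξ‖ ^ 2 := by
  have hK (j : ι) := isFiniteVariationKernel_directionalRieszKernel hs (b j)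
  have hLU := lipschitzWith_ofReal_comp hL
  have hMU (x) : ‖(u x : ℂ)‖ ≤ M := (Complex.norm_real _).trans_le (hM x)
  have hU : volume (Function.support fun x => (u x : ℂ)) ≠ ∞ :=
    (support_ofReal_comp u).symm ▸ hu
  simp only [norm_sq_fracGrad b hs hL hM, rieszSymbolNormSq, Finset.sum_mul]
  rw [integral_const_mul,
    integral_finsetSum _ fun j _ => (memLp_two_nonlocalDiff (hK j) hL hM hu).norm.integrable_sq,
    integral_finsetSum _ fun j _ => integrable_norm_sq_nonlocalSymbol_mul (hK j) hLU hMU hU]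
  congr! 2 with j
  simp only [← integral_norm_sq_nonlocalDiff (hK j) hLU hMU hU, nonlocalDiff_ofReal,
    Complex.norm_real]

theorem exists_pos_integral_sq_le_mul_integral_norm_sq_fracGrad (hs : s ∈ Set.Ioo (0 : ℝ) 1)
    {Ω : Set (EuclideanSpace ℝ (Fin d))} (hΩ : volume Ω ≠ ∞) :
    ∃ D > 0, ∀ (u : EuclideanSpace ℝ (Fin d) → ℝ) (L : ℝ≥0) (M : ℝ), LipschitzWith L u →
      (∀ x, ‖u x‖ ≤ M) → Function.support u ⊆ Ω →
      ∫ x, u x ^ 2 ≤ D * ∫ x, ‖fracGrad d s u x‖ ^ 2 := by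
  let b := EuclideanSpace.basisFun (Fin d) ℝ
  obtain ⟨c, hc, symbol_lower_bound⟩ := exists_pos_mul_norm_rpow_le_rieszSymbolNormSq b hs
  obtain ⟨ε, hε, hball, hball_Ω⟩ := exists_measureReal_ball_mul_le volume
    (0 : EuclideanSpace ℝ (Fin d)) (measureReal_nonneg (s := Ω)) one_half_pos
  have hμ := muS_pos d hs
  have hs₀ := hs.1
  refine ⟨2 / (c * ε ^ (2 * s) * muS d s ^ 2), by positivity, fun u L M hL hM hu => ?_⟩
  have hLU := lipschitzWith_ofReal_comp hL
  have hMU (x) : ‖(u x : ℂ)‖ ≤ M := (Complex.norm_real _).trans_le (hM x)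
  have hU : (Function.support fun x => (u x : ℂ)) ⊆ Ω := (support_ofReal_comp u).trans_subset hu
  have symbol_ge {ξ} (hξ : ξ ∉ Metric.ball 0 ε) : c * ε ^ (2 * s) ≤ rieszSymbolNormSq b s ξ := by
    rw [mem_ball_zero_iff, not_lt] at hξ
    exact le_trans (by gcongr) (symbol_lower_bound ξ)
  have uncertainty := mul_integral_norm_sq_le_integral_mul_norm_sq_fourier measurableSet_ball
    hball hΩ hball_Ω (memLp_of_norm_le_of_support_subset hLU.continuous.aestronglyMeasurable hMU
      hΩ hU 2) hU (by positivity) (rieszSymbolNormSq_nonneg b s) (fun _ => symbol_ge)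
    (integrable_rieszSymbolNormSq_mul b hs hLU hMU (measure_ne_top_of_subset hU hΩ))
  simp only [Complex.norm_real, Real.norm_eq_abs, sq_abs] at uncertainty
  rw [integral_norm_sq_fracGrad b hs hL hM (measure_ne_top_of_subset hu hΩ), div_mul_eq_mul_div,
    le_div_iff₀ (by positivity)]
  linear_combination muS d s ^ 2 * uncertainty

end FracGrad

end RieszGradient

theorem stmt4_general (d : ℕ) (hd : 1 ≤ d) (s : ℝ) (hs : s ∈ Set.Ioo (0 : ℝ) 1)
    (Ω : Set (EuclideanSpace ℝ (Fin d))) (hΩ : volume Ω ≠ ⊤) :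
    ∃ C : ℝ, 0 < C ∧
      ∀ (u : EuclideanSpace ℝ (Fin d) → ℝ) (L : NNReal) (M : ℝ),
        LipschitzWith L u → (∀ x, ‖u x‖ ≤ M) → Function.support u ⊆ Ω →
        (∫ x in Ω, (u x) ^ 2) ^ ((1 : ℝ) / 2) ≤
          C * (∫ x, ‖fracGrad d s u x‖ ^ 2) ^ ((1 : ℝ) / 2) := by
  have : NeZero d := ⟨Nat.one_le_iff_ne_zero.1 hd⟩
  obtain ⟨D, hD, squared⟩ := exists_pos_integral_sq_le_mul_integral_norm_sq_fracGrad hs hΩ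
  refine ⟨D ^ ((1 : ℝ) / 2), by positivity, fun u L M hL hM hu => ?_⟩
  have setIntegral_sq : ∫ x in Ω, u x ^ 2 = ∫ x, u x ^ 2 :=
    setIntegral_eq_integral_of_forall_compl_eq_zero fun x hx => by
      rw [Function.notMem_support.1 fun h => hx (hu h), zero_pow two_ne_zero]
  rw [setIntegral_sq, ← Real.mul_rpow hD.le (integral_nonneg fun x => by positivity)]
  exact Real.rpow_le_rpow (integral_nonneg fun x => by positivity) (squared u L M hL hM hu)
    one_half_pos.le

/-- The fractional Poincaré inequality on `C_c^∞(Ω)` for a bounded open set `Ω`. -/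
theorem stmt4 (d : ℕ) (hd : 1 ≤ d) (s : ℝ) (hs : s ∈ Set.Ioo (0 : ℝ) 1)
    (Ω : Set (EuclideanSpace ℝ (Fin d))) (hΩo : IsOpen Ω) (hΩb : Bornology.IsBounded Ω) :
    ∃ C : ℝ, 0 < C ∧
      ∀ u : EuclideanSpace ℝ (Fin d) → ℝ,
        ContDiff ℝ (⊤ : ℕ∞) u → HasCompactSupport u → tsupport u ⊆ Ω →
        (∫ x in Ω, (u x) ^ 2) ^ ((1 : ℝ) / 2) ≤
          C * (∫ x, ‖fracGrad d s u x‖ ^ 2) ^ ((1 : ℝ) / 2) := by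
  obtain ⟨C, hC, poincaré⟩ := stmt4_general d hd s hs Ω hΩb.measure_lt_top.ne
  refine ⟨C, hC, fun u hu hcu hsu => ?_⟩
  obtain ⟨L, hL⟩ := hu.lipschitzWith_of_hasCompactSupport hcu (by simp)
  obtain ⟨M, hM⟩ := hcu.exists_bound_of_continuous hu.continuous
  exact poincaré u L M hL hM ((subset_tsupport u).trans hsu)

end
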